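/- Let R be a standard graded algebra over a field K, let d > 0 be a degree, and let l_1,…,l_r be linear forms of R satisfying property (Gr,d). Then dim_K (R/(l_1))_d ≤ (dim_K R_d)_{⟨d⟩}. -/

import Mathlib

/-- Polynomial functions on a `K`-vector space `V`: the subalgebra of `V → K`
generated by the linear functionals. -/
def polyFuns (K V : Type*) [Field K] [AddCommGroup V] [Module K V] : Subalgebra K (V → K) :=
  Algebra.adjoin K {f : V → K | ∃ φ : V →ₗ[K] K, ⇑φ = f}

/-- A subset of (the affine space of) a `K`-vector space is Zariski closed if it is the
common zero locus of a family of polynomial functions. -/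
def IsZClosed (K : Type*) {V : Type*} [Field K] [AddCommGroup V] [Module K V]
    (Z : Set V) : Prop :=
  ∃ S : Set (V → K), (∀ f ∈ S, f ∈ polyFuns K V) ∧ Z = {v | ∀ f ∈ S, f v = 0}

/-- A subset is Zariski open if its complement is Zariski closed. -/
def IsZOpen (K : Type*) {V : Type*} [Field K] [AddCommGroup V] [Module K V]
    (U : Set V) : Prop :=
  IsZClosed K Uᶜ

/-- An irreducible variety: a nonempty Zariski closed set which is not the union of two
proper closed subsets. -/
def IsIrredVariety (K : Type*) {V : Type*} [Field K] [AddCommGroup V] [Module K V]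
    (W : Set V) : Prop :=
  IsZClosed K W ∧ W.Nonempty ∧
    ∀ Z₁ Z₂ : Set V, IsZClosed K Z₁ → IsZClosed K Z₂ → W ⊆ Z₁ ∪ Z₂ → (W ⊆ Z₁ ∨ W ⊆ Z₂)

/-- Auxiliary recursion for `wordIdeal`: letters are booleans, `true` standing for the
letter `c` (colon) and `false` for the letter `s` (sum). The natural number argument keeps
track of which linear form is to be used next (0-indexed). -/
def wordIdealAux {R : Type*} [CommRing R] (l : ℕ → R) : ℕ → Ideal R → List Bool → Ideal R
  | _, I, [] => I
  | j, I, a :: o =>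
      wordIdealAux l (j + 1)
        (if a then I.colon (Ideal.span {l j}) else I ⊔ Ideal.span {l j}) o

/-- The ideal `I_{l,o}` attached to a sequence of (linear) forms `l` and a word `o` in the
letters `{c, s}` (here `c = true`, `s = false`): starting from `(0)`, the `j`-th letter
either colons (`c`) or adds (`s`) the `j`-th form. -/
def wordIdeal {R : Type*} [CommRing R] (l : ℕ → R) (o : List Bool) : Ideal R :=
  wordIdealAux l 0 ⊥ o

/-- The degree `d` component `I ∩ R_d` of an ideal `I`, as a `K`-subspace of `𝒜 d`. -/
def homComp {K R : Type*} [Field K] [CommRing R] [Algebra K R]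
    (𝒜 : ℕ → Submodule K R) (I : Ideal R) (d : ℕ) : Submodule K (𝒜 d) :=
  Submodule.comap (𝒜 d).subtype (Submodule.restrictScalars K I)

/-- `dim_K (I)_d`, the dimension of the degree `d` component of the (homogeneous) ideal `I`. -/
noncomputable def homDim {K R : Type*} [Field K] [CommRing R] [Algebra K R]
    (𝒜 : ℕ → Submodule K R) (I : Ideal R) (d : ℕ) : ℕ :=
  Module.finrank K (homComp 𝒜 I d)

/-- `dim_K (R/I)_d`, the dimension of the degree `d` component of `R/I` for a
(homogeneous) ideal `I`, computed as `dim 𝒜 d / (I ∩ 𝒜 d)`. -/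
noncomputable def quotDim {K R : Type*} [Field K] [CommRing R] [Algebra K R]
    (𝒜 : ℕ → Submodule K R) (I : Ideal R) (d : ℕ) : ℕ :=
  Module.finrank K ((𝒜 d) ⧸ homComp 𝒜 I d)

/-- `macaulayDown c d = c_⟨d⟩`: if `c = C(k_d,d) + … + C(k_1,1)` is the `d`-th Macaulay
representation of `c`, then `c_⟨d⟩ = C(k_d - 1,d) + … + C(k_1 - 1,1)`; computed greedily. -/
def macaulayDown : ℕ → ℕ → ℕ
  | _, 0 => 0
  | c, d + 1 =>
      let k := Nat.findGreatest (fun k => Nat.choose k (d + 1) ≤ c) (c + d + 1)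
      Nat.choose (k - 1) (d + 1) + macaulayDown (c - Nat.choose k (d + 1)) d

/-- Property (Gr,d) for the linear forms `l 0, …, l (r-1)` (letters: `true = c`,
`false = s`): for every word `o` of length `i ≤ r`,
(1) if `m ⊄ I_o` and `i < r` then `l_{i+1} ∉ I_o`;
(2) if `i = r` and `|o|_c < d` then `m ⊆ I_o`;
(3) if `i ≤ r - 2` then `dim (I_{o,c,s})_{d - |o|_c - 1} ≤ dim (I_{o,s,c})_{d - |o|_c - 1}`. -/
def GrProp {K R : Type*} [Field K] [CommRing R] [Algebra K R]
    (𝒜 : ℕ → Submodule K R) [GradedAlgebra 𝒜] (l : ℕ → R) (r d : ℕ) : Prop :=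
  ∀ o : List Bool, o.length ≤ r →
    (¬ (HomogeneousIdeal.irrelevant 𝒜).toIdeal ≤ wordIdeal l o → o.length < r →
        l o.length ∉ wordIdeal l o) ∧
    (o.length = r → o.count true < d →
        (HomogeneousIdeal.irrelevant 𝒜).toIdeal ≤ wordIdeal l o) ∧
    (o.length + 2 ≤ r →
        homDim 𝒜 (wordIdeal l (o ++ [true, false])) (d - o.count true - 1) ≤
          homDim 𝒜 (wordIdeal l (o ++ [false, true])) (d - o.count true - 1))


theorem md_choose_lb (c d : ℕ) : c < Nat.choose (c + d + 1) (d + 1) := by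
  induction d with
  | zero => simp
  | succ d ih =>
    rw [show c + (d + 1) + 1 = (c + d + 1) + 1 by ring, Nat.choose_succ_succ]
    omega

/-- greedy step -/
theorem md_exists (c d : ℕ) : ∃ k c', d ≤ k ∧ c = Nat.choose k (d + 1) + c' ∧
    c' < Nat.choose k d := by
  set k := Nat.findGreatest (fun k => Nat.choose k (d + 1) ≤ c) (c + d + 1) with hk
  have hP : Nat.choose d (d + 1) ≤ c := by simp
  have h1 : Nat.choose k (d + 1) ≤ c :=
    Nat.findGreatest_spec (P := fun k => Nat.choose k (d + 1) ≤ c)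
      (m := d) (n := c + d + 1) (by omega) hP
  have h2 : d ≤ k := Nat.le_findGreatest (by omega) hP
  have h3 : k < c + d + 1 := by
    by_contra hcon
    have := Nat.choose_le_choose (d + 1) (not_lt.mp hcon)
    have := md_choose_lb c d
    omega
  have h4 : ¬ Nat.choose (k + 1) (d + 1) ≤ c :=
    Nat.findGreatest_is_greatest (P := fun k => Nat.choose k (d + 1) ≤ c)
      (n := c + d + 1) (k := k + 1) (by omega) (by omega)
  rw [Nat.choose_succ_succ'] at h4
  exact ⟨k, c - Nat.choose k (d + 1), h2, by omega, by omega⟩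

theorem md_rec_lt (d k c' : ℕ) (hk : d ≤ k) (hc : c' < Nat.choose k d) :
    macaulayDown (Nat.choose k (d + 1) + c') (d + 1) =
      Nat.choose (k - 1) (d + 1) + macaulayDown c' d := by
  have key : Nat.findGreatest (fun j => Nat.choose j (d + 1) ≤ Nat.choose k (d + 1) + c')
      (Nat.choose k (d + 1) + c' + d + 1) = k := by
    rw [Nat.findGreatest_eq_iff]
    refine ⟨?_, fun _ => by omega, ?_⟩
    · by_contra hcon
      have := Nat.choose_le_choose (d + 1) (not_le.mp hcon).le
      have h := md_choose_lb (Nat.choose k (d + 1) + c') d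
      omega
    · intro n hn _ hle
      have := Nat.choose_le_choose (d + 1) (Nat.succ_le_of_lt hn)
      rw [Nat.succ_eq_add_one, Nat.choose_succ_succ'] at this
      omega
  rw [macaulayDown]
  simp only [key, Nat.add_sub_cancel_left]

theorem md_zero (d : ℕ) : macaulayDown 0 d = 0 := by
  induction d with
  | zero => rfl
  | succ d ih =>
    have := md_rec_lt d d 0 le_rfl (by simp)
    rw [ih] at this
    simpa [Nat.choose_eq_zero_of_lt (show d - 1 < d + 1 by omega)] using this

theorem md_one (c : ℕ) : macaulayDown c 1 = c - 1 := by
  have := md_rec_lt 0 c 0 (by omega) (by simp)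
  simpa [macaulayDown] using this

theorem md_choose (d k : ℕ) : macaulayDown (Nat.choose k (d + 1)) (d + 1) =
    Nat.choose (k - 1) (d + 1) := by
  rcases le_or_gt d k with h | h
  · have := md_rec_lt d k 0 h (Nat.choose_pos h)
    simpa [md_zero] using this
  · rw [Nat.choose_eq_zero_of_lt (by omega), Nat.choose_eq_zero_of_lt (by omega), md_zero]

theorem md_rec (d k c' : ℕ) (hc : c' ≤ Nat.choose k (d + 1)) :
    macaulayDown (Nat.choose k (d + 2) + c') (d + 2) =
      Nat.choose (k - 1) (d + 2) + macaulayDown c' (d + 1) := by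
  rcases le_or_gt (d + 1) k with h | h
  · rcases hc.lt_or_eq with h' | h'
    · exact md_rec_lt (d + 1) k c' h h'
    · subst h'
      rw [md_choose, add_comm (Nat.choose k (d + 2)), ← Nat.choose_succ_succ, md_choose]
      obtain ⟨k, rfl⟩ : ∃ j, k = j + 1 := ⟨k - 1, by omega⟩
      simp only [Nat.succ_eq_add_one, Nat.add_sub_cancel]
      rw [Nat.choose_succ_succ, add_comm]
  · rw [Nat.choose_eq_zero_of_lt h] at hc
    obtain rfl : c' = 0 := by omega
    rw [Nat.choose_eq_zero_of_lt (by omega), Nat.choose_eq_zero_of_lt (by omega), md_zero, md_zero]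

theorem md_step (d c : ℕ) : macaulayDown c d ≤ macaulayDown (c + 1) d ∧
    macaulayDown (c + 1) d ≤ macaulayDown c d + 1 := by
  induction d generalizing c with
  | zero => simp [macaulayDown]
  | succ d ih =>
    cases d with
    | zero => simp only [zero_add, md_one]; omega
    | succ d =>
      obtain ⟨k, c', -, rfl, h⟩ := md_exists c (d + 1)
      rw [md_rec d k c' h.le, add_assoc, md_rec d k (c' + 1) h]
      have := ih c'
      omega

theorem md_mono (d : ℕ) : Monotone (fun c => macaulayDown c d) :=
  monotone_nat_of_le_succ fun c => (md_step d c).1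

theorem md_lip (d a b : ℕ) (h : a ≤ b) :
    macaulayDown b d + a ≤ macaulayDown a d + b := by
  induction b, h using Nat.le_induction with
  | base => exact le_rfl
  | succ n _ ih => have := (md_step d n).2; omega

theorem md_strict (e k c : ℕ) (hk : e + 1 < k) (hc : c < Nat.choose k (e + 1)) :
    macaulayDown c (e + 1) < Nat.choose (k - 1) (e + 1) := by
  induction e generalizing k c with
  | zero => simp [md_one] at *; omega
  | succ e ih =>
    obtain ⟨j, c', hj, rfl, h⟩ := md_exists c (e + 1)
    have hjk : j < k := by
      by_contra hcon
      have := Nat.choose_le_choose (e + 1 + 1) (not_lt.mp hcon)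
      omega
    rw [md_rec e j c' h.le]
    rcases hj.lt_or_eq with h' | h'
    · have := ih j c' h' h
      have h2 := Nat.choose_le_choose (e + 2) (show j ≤ k - 1 by omega)
      obtain ⟨j, rfl⟩ : ∃ i, j = i + 1 := ⟨j - 1, by omega⟩
      simp only [Nat.add_sub_cancel] at *
      have e3 : Nat.choose (j + 1) (e + 2) = Nat.choose j (e + 1) + Nat.choose j (e + 2) :=
        Nat.choose_succ_succ _ _
      have e4 : Nat.choose (k - 1) (e + 1 + 1) = Nat.choose (k - 1) (e + 2) := rfl
      omega
    · subst h'
      rw [Nat.choose_self] at h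
      obtain rfl : c' = 0 := by omega
      rw [md_zero, Nat.choose_eq_zero_of_lt (by omega)]
      exact Nat.choose_pos (by omega)

/-- key inequality, with `g = c - f c`. -/
theorem md_key (d c : ℕ) (hc : 0 < c) :
    macaulayDown (c - macaulayDown c (d + 1) - 1) d
      + macaulayDown (macaulayDown c (d + 1) + 1) (d + 1) < macaulayDown c (d + 1) + 1 := by
  induction d generalizing c with
  | zero => simp only [macaulayDown.eq_1, zero_add, md_one]; omega
  | succ d ih =>
    obtain ⟨k, c', hk, rfl, h⟩ := md_exists c (d + 1)
    rw [md_rec d k c' h.le]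
    obtain ⟨k, rfl⟩ : ∃ i, k = i + 1 := ⟨k - 1, by omega⟩
    have e1 : Nat.choose (k + 1) (d + 1 + 1) = Nat.choose k (d + 1) + Nat.choose k (d + 2) :=
      Nat.choose_succ_succ _ _
    have e2 : Nat.choose (k + 1) (d + 1) = Nat.choose k d + Nat.choose k (d + 1) :=
      Nat.choose_succ_succ _ _
    simp only [Nat.add_sub_cancel]
    rcases Nat.eq_zero_or_pos c' with rfl | hc'
    · have hk1 : d + 1 ≤ k := by
        by_contra hcon
        have : Nat.choose (k + 1) (d + 1 + 1) = 0 := Nat.choose_eq_zero_of_lt (by omega)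
        omega
      have hp : 0 < Nat.choose k (d + 1) := Nat.choose_pos hk1
      have h1 : macaulayDown 1 (d + 1) = 0 := by
        simpa [Nat.choose_eq_zero_of_lt] using md_choose d (d + 1)
      rw [md_zero, add_zero, add_zero, md_rec d k 1 hp, h1]
      have h2 := md_mono (d + 1) (show Nat.choose (k + 1) (d + 1 + 1) -
        Nat.choose k (d + 2) - 1 ≤ Nat.choose k (d + 1) by omega)
      simp only at h2
      rw [md_choose] at h2
      obtain ⟨k, rfl⟩ : ∃ i, k = i + 1 := ⟨k - 1, by omega⟩
      have e3 : Nat.choose (k + 1) (d + 2) = Nat.choose k (d + 1) + Nat.choose k (d + 2) :=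
        Nat.choose_succ_succ _ _
      simp only [Nat.add_sub_cancel] at *
      omega
    · have hih := ih c' hc'
      have hk1 : d + 1 ≤ k := by
        by_contra hcon
        obtain rfl : k = d := by omega
        simp at h
        omega
      have hs := md_strict d (k + 1) c' (by omega) h
      simp only [Nat.add_sub_cancel] at hs
      have hs1 : macaulayDown c' (d + 1) + 1 ≤ Nat.choose k (d + 1) := hs
      rw [add_assoc (Nat.choose k (d + 2)) _ 1, md_rec d k _ hs1]
      have hl := md_lip (d + 1) c' _ h.le
      rw [md_choose] at hl
      simp only [Nat.add_sub_cancel] at hl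
      have hlt : macaulayDown c' (d + 1) < c' := by
        have := md_lip (d + 1) 1 c' hc'
        have h1 : macaulayDown 1 (d + 1) = 0 := by
          simpa [Nat.choose_eq_zero_of_lt] using md_choose d (d + 1)
        omega
      have e4 : Nat.choose (k + 1) (d + 1 + 1) + c' -
          (Nat.choose k (d + 2) + macaulayDown c' (d + 1)) - 1 =
          Nat.choose k (d + 1) + (c' - macaulayDown c' (d + 1) - 1) := by omega
      rw [e4]
      have e5 : macaulayDown (Nat.choose k (d + 1) + (c' - macaulayDown c' (d + 1) - 1)) (d + 1)
          = Nat.choose (k - 1) (d + 1) + macaulayDown (c' - macaulayDown c' (d + 1) - 1) d := by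
        cases d with
        | zero =>
          simp only [zero_add, md_one, macaulayDown.eq_1, Nat.choose_one_right]; omega
        | succ d => exact md_rec d k _ (by omega)
      rw [e5]
      obtain ⟨k, rfl⟩ : ∃ i, k = i + 1 := ⟨k - 1, by omega⟩
      have e3 : Nat.choose (k + 1) (d + 2) = Nat.choose k (d + 1) + Nat.choose k (d + 2) :=
        Nat.choose_succ_succ _ _
      simp only [Nat.add_sub_cancel] at *
      omega

theorem md_numeric (d b c : ℕ) (hbc : b ≤ c)
    (h : b ≤ macaulayDown (c - b) d + macaulayDown b (d + 1)) :
    b ≤ macaulayDown c (d + 1) := by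
  by_contra hcon
  push Not at hcon
  have h1 := md_key d c (by omega)
  have h2 := md_lip (d + 1) (macaulayDown c (d + 1) + 1) b hcon
  have h3 := md_mono d (show c - b ≤ c - macaulayDown c (d + 1) - 1 by omega)
  simp only at h3
  omega

theorem wia_append {R : Type*} [CommRing R] (l : ℕ → R) (o o' : List Bool) (j : ℕ) (I : Ideal R) :
    wordIdealAux l j I (o ++ o') = wordIdealAux l (j + o.length) (wordIdealAux l j I o) o' := by
  induction o generalizing j I with
  | nil => simp [wordIdealAux]
  | cons a o ih =>
    simp only [List.cons_append, wordIdealAux, ih, List.length_cons]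
    congr 1
    omega

theorem wi_true {R : Type*} [CommRing R] (l : ℕ → R) (o : List Bool) :
    wordIdeal l (o ++ [true]) = (wordIdeal l o).colon (Ideal.span {l o.length}) := by
  simp [wordIdeal, wia_append, wordIdealAux]

theorem wi_false {R : Type*} [CommRing R] (l : ℕ → R) (o : List Bool) :
    wordIdeal l (o ++ [false]) = (wordIdeal l o) ⊔ (Ideal.span {l o.length}) := by
  simp [wordIdeal, wia_append, wordIdealAux]

section alg
variable {K R : Type*} [Field K] [CommRing R] [Algebra K R]
    (𝒜 : ℕ → Submodule K R) [GradedAlgebra 𝒜]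

theorem colon_homog (I : Ideal R) (hI : I.IsHomogeneous 𝒜) (x : R) (hx : x ∈ 𝒜 1) :
    (I.colon (Ideal.span {x})).IsHomogeneous 𝒜 := by
  intro i r hr
  rw [Ideal.mem_colon_span_singleton] at hr ⊢
  have := hI (i + 1) hr
  rwa [DirectSum.coe_decompose_mul_add_of_right_mem 𝒜 hx] at this

theorem span_homog (x : R) (hx : x ∈ 𝒜 1) : (Ideal.span {x}).IsHomogeneous 𝒜 :=
  Ideal.homogeneous_span 𝒜 _ (by rintro y rfl; exact ⟨1, hx⟩)

theorem wi_homog (l : ℕ → R) (r : ℕ) (hl : ∀ j < r, l j ∈ 𝒜 1) (o : List Bool)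
    (ho : o.length ≤ r) : (wordIdeal l o).IsHomogeneous 𝒜 := by
  induction o using List.reverseRecOn with
  | nil => exact Ideal.IsHomogeneous.bot 𝒜
  | append_singleton o a ih =>
    simp only [List.length_append, List.length_singleton] at ho
    have h1 := ih (by omega)
    have h2 := hl o.length (by omega)
    cases a with
    | true => rw [wi_true]; exact colon_homog 𝒜 _ h1 _ h2
    | false => rw [wi_false]; exact h1.sup (span_homog 𝒜 _ h2)

theorem fin_comp (h0 : 𝒜 0 = (1 : Submodule K R)) (hstd : ∀ n, 𝒜 (n + 1) = 𝒜 1 * 𝒜 n)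
    [FiniteDimensional K (𝒜 1)] (n : ℕ) : FiniteDimensional K (𝒜 n) := by
  rw [FiniteDimensional, Module.Finite.iff_fg]
  induction n with
  | zero => rw [h0, Submodule.one_eq_span]; exact Submodule.fg_span_singleton _
  | succ n ih =>
    rw [hstd]
    exact Submodule.FG.mul (Module.Finite.iff_fg.mp inferInstance) ih

theorem quot_split (I : Ideal R) (hI : I.IsHomogeneous 𝒜) (x : R) (hx : x ∈ 𝒜 1) (n : ℕ)
    [FiniteDimensional K (𝒜 n)] [FiniteDimensional K (𝒜 (n + 1))] :
    quotDim 𝒜 I (n + 1) = quotDim 𝒜 (I.colon (Ideal.span {x})) n +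
      quotDim 𝒜 (I ⊔ Ideal.span {x}) (n + 1) := by
  have hm : ∀ y : 𝒜 n, (y : R) * x ∈ 𝒜 (n + 1) := fun y => SetLike.mul_mem_graded y.2 hx
  let m : 𝒜 n →ₗ[K] 𝒜 (n + 1) :=
    ((LinearMap.mulRight K x).comp (𝒜 n).subtype).codRestrict (𝒜 (n + 1)) hm
  let f := (homComp 𝒜 I (n + 1)).mkQ.comp m
  have hker : LinearMap.ker f = homComp 𝒜 (I.colon (Ideal.span {x})) n := by
    ext y
    rw [LinearMap.mem_ker]
    simp only [f, LinearMap.comp_apply, Submodule.mkQ_apply, Submodule.Quotient.mk_eq_zero]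
    simp only [homComp, Submodule.mem_comap, Submodule.restrictScalars_mem,
      Ideal.mem_colon_span_singleton]
    rfl
  have hle : homComp 𝒜 I (n + 1) ≤ homComp 𝒜 (I ⊔ Ideal.span {x}) (n + 1) :=
    fun y hy => Submodule.mem_sup_left hy
  have hrange : LinearMap.range f =
      (homComp 𝒜 (I ⊔ Ideal.span {x}) (n + 1)).map (homComp 𝒜 I (n + 1)).mkQ := by
    apply le_antisymm
    · rintro _ ⟨y, rfl⟩
      refine ⟨m y, ?_, rfl⟩
      exact Submodule.mem_sup_right (Ideal.mul_mem_left _ _ (Ideal.mem_span_singleton_self x))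
    · rintro _ ⟨z, hz, rfl⟩
      have hz' : (z : R) ∈ I ⊔ Ideal.span {x} := hz
      obtain ⟨i, hi, t, ht, hsum⟩ := Submodule.mem_sup.mp hz'
      obtain ⟨y, rfl⟩ := Ideal.mem_span_singleton'.mp ht
      refine ⟨DirectSum.decompose 𝒜 y n, ?_⟩
      simp only [f, LinearMap.comp_apply, Submodule.mkQ_apply]
      rw [eq_comm, Submodule.Quotient.eq]
      have h1 : (z : R) = DirectSum.decompose 𝒜 (z : R) (n + 1) := by
        rw [DirectSum.decompose_of_mem_same 𝒜 z.2]
      have h2 : (DirectSum.decompose 𝒜 (z : R) (n + 1) : R) =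
          DirectSum.decompose 𝒜 i (n + 1) + DirectSum.decompose 𝒜 y n * x := by
        rw [← hsum, DirectSum.decompose_add, DirectSum.add_apply, Submodule.coe_add,
          DirectSum.coe_decompose_mul_add_of_right_mem 𝒜 hx]
      change (z : R) - (DirectSum.decompose 𝒜 y n : R) * x ∈ I
      rw [h1, h2, add_sub_cancel_right]
      exact hI (n + 1) hi
  have e1 := (LinearMap.quotKerEquivRange f).finrank_eq
  have e2 := (LinearMap.range f).finrank_quotient_add_finrank
  rw [hrange] at e1 e2
  rw [hker] at e1
  have e3 := (Submodule.quotientQuotientEquivQuotient _ _ hle).finrank_eq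
  unfold quotDim
  omega

theorem quotDim_eq_zero (I : Ideal R)
    (h : (HomogeneousIdeal.irrelevant 𝒜).toIdeal ≤ I) (n : ℕ) : quotDim 𝒜 I (n + 1) = 0 := by
  have : homComp 𝒜 I (n + 1) = ⊤ := by
    rw [eq_top_iff]
    intro y _
    exact h (HomogeneousIdeal.mem_irrelevant_of_mem 𝒜 (Nat.succ_pos n) y.2)
  unfold quotDim
  rw [this]
  exact Module.finrank_zero_of_subsingleton

theorem quotDim_zero (h0 : 𝒜 0 = (1 : Submodule K R)) (I : Ideal R) (h : (1 : R) ∉ I) :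
    quotDim 𝒜 I 0 = 1 := by
  have h1 : (1 : R) ∈ 𝒜 0 := by rw [h0]; exact Submodule.one_le.mp le_rfl
  refine (finrank_eq_one_iff_of_nonzero' (Submodule.Quotient.mk ⟨1, h1⟩) ?_).mpr ?_
  · rw [Ne, Submodule.Quotient.mk_eq_zero]
    exact h
  · intro w
    obtain ⟨⟨y, hy⟩, rfl⟩ := Submodule.Quotient.mk_surjective _ w
    rw [h0] at hy
    obtain ⟨c, rfl⟩ := Submodule.mem_one.mp hy
    refine ⟨c, ?_⟩
    rw [← Submodule.Quotient.mk_smul]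
    congr 1
    ext
    simp [Algebra.algebraMap_eq_smul_one]

theorem gr_main (h0 : 𝒜 0 = (1 : Submodule K R)) (hstd : ∀ n, 𝒜 (n + 1) = 𝒜 1 * 𝒜 n)
    [FiniteDimensional K (𝒜 1)] (d r : ℕ)
    (l : ℕ → R) (hl : ∀ j < r, l j ∈ 𝒜 1) (hGr : GrProp 𝒜 l r d) (t : ℕ) :
    ∀ (o : List Bool) (e : ℕ), o.length + 1 + t = r → o.count true + e + 1 = d →
      quotDim 𝒜 (wordIdeal l (o ++ [false])) (e + 1) ≤
        macaulayDown (quotDim 𝒜 (wordIdeal l o) (e + 1)) (e + 1) := by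
  have hfin : ∀ n, FiniteDimensional K (𝒜 n) := fin_comp 𝒜 h0 hstd
  have split : ∀ (o : List Bool) (n : ℕ), o.length < r → quotDim 𝒜 (wordIdeal l o) (n + 1) =
      quotDim 𝒜 (wordIdeal l (o ++ [true])) n +
        quotDim 𝒜 (wordIdeal l (o ++ [false])) (n + 1) := by
    intro o n ho
    rw [wi_true, wi_false]
    exact quot_split 𝒜 _ (wi_homog 𝒜 l r hl o ho.le) _ (hl _ ho) n
  induction t with
  | zero =>
    intro o e ho hc
    rw [quotDim_eq_zero]
    · exact Nat.zero_le _
    · exact (hGr (o ++ [false]) (by simp; omega)).2.1 (by simp; omega) (by simp; omega)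
  | succ t ih =>
    intro o e ho hc
    have hs := split o e (by omega)
    cases e with
    | zero =>
      rw [zero_add, md_one]
      by_cases hm : (HomogeneousIdeal.irrelevant 𝒜).toIdeal ≤ wordIdeal l o
      · have := quotDim_eq_zero 𝒜 _ hm 0
        simp only [zero_add] at *
        omega
      · have hn := (hGr o (by omega)).1 hm (by omega)
        have : quotDim 𝒜 (wordIdeal l (o ++ [true])) 0 = 1 := by
          apply quotDim_zero 𝒜 h0
          rwa [wi_true, Ideal.mem_colon_span_singleton, one_mul]
        simp only [zero_add] at *
        omega
    | succ e =>
      have h3 := (hGr o (by omega)).2.2 (by omega)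
      rw [show d - o.count true - 1 = e + 1 by omega] at h3
      have hq : ∀ I : Ideal R, quotDim 𝒜 I (e + 1) + homDim 𝒜 I (e + 1) =
          Module.finrank K (𝒜 (e + 1)) := fun I =>
        (homComp 𝒜 I (e + 1)).finrank_quotient_add_finrank
      have q1 := hq (wordIdeal l (o ++ [true, false]))
      have q2 := hq (wordIdeal l (o ++ [false, true]))
      have i1 := ih (o ++ [true]) e (by simp; omega) (by simp; omega)
      have i2 := ih (o ++ [false]) (e + 1) (by simp; omega) (by simp; omega)
      have hs2 := split (o ++ [false]) (e + 1) (by simp; omega)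
      simp only [List.append_assoc, List.cons_append, List.nil_append] at i1 i2 hs2
      apply md_numeric (e + 1) _ _ (by omega)
      rw [show quotDim 𝒜 (wordIdeal l o) (e + 1 + 1) -
        quotDim 𝒜 (wordIdeal l (o ++ [false])) (e + 1 + 1) =
        quotDim 𝒜 (wordIdeal l (o ++ [true])) (e + 1) by omega]
      omega

end alg

/-- **Hyperplane restriction theorem for forms satisfying (Gr,d).**  If the linear forms
`l 0, …, l (r-1)` of a standard graded algebra `R` satisfy property (Gr,d), then
`dim_K (R/(l 0))_d ≤ (dim_K R_d)_⟨d⟩`. -/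
theorem hyperplane_restriction_of_GrProp
    {K R : Type*} [Field K] [CommRing R] [Algebra K R]
    (𝒜 : ℕ → Submodule K R) [GradedAlgebra 𝒜]
    (h0 : 𝒜 0 = (1 : Submodule K R)) (hstd : ∀ n, 𝒜 (n + 1) = 𝒜 1 * 𝒜 n)
    [FiniteDimensional K (𝒜 1)] (d r : ℕ) (hd : 0 < d) (hrpos : 0 < r)
    (l : ℕ → R) (hl : ∀ j < r, l j ∈ 𝒜 1)
    (hGr : GrProp 𝒜 l r d) :
    quotDim 𝒜 (Ideal.span {l 0}) d ≤ macaulayDown (Module.finrank K (𝒜 d)) d := by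
  obtain ⟨e, rfl⟩ : ∃ e, d = e + 1 := ⟨d - 1, by omega⟩
  have := gr_main 𝒜 h0 hstd (e + 1) r l hl hGr (r - 1) [] e (by simp; omega) (by simp)
  have h1 : wordIdeal l ([] ++ [false]) = Ideal.span {l 0} := by
    simp [wordIdeal, wordIdealAux]
  have h2 : quotDim 𝒜 (wordIdeal l []) (e + 1) ≤ Module.finrank K (𝒜 (e + 1)) := by
    have := fin_comp 𝒜 h0 hstd (e + 1)
    exact Submodule.finrank_quotient_le _
  rw [h1] at this
  exact this.trans (md_mono (e + 1) h2)
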